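/- Let M and N be Artinian (finite length) graded R = k[x_1,…,x_n]-modules with the strong Lefschetz property, where k has characteristic p > s + t with s the socle degree of M and t the socle degree of N. Let l ∈ R_1 and y ∈ R_1 be strong Lefschetz elements for M and N respectively. If the Hilbert function of M is symmetric and the decomposition of N as a graded k[y]-module is almost centered, then M ⊗_k N has the strong Lefschetz property. -/

import Mathlib

open MvPolynomial TensorProduct

/-- `gr` is a grading making `M` a graded module over the standard graded polynomial ring
`k[x_1, …, x_n]`: `M` is the internal direct sum of the subspaces `gr i`, and homogeneous
polynomials of degree `i` map `gr j` into `gr (i + j)`. -/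
def IsGrading (k : Type*) [Field k] (n : ℕ) {M : Type*} [AddCommGroup M] [Module k M]
    [Module (MvPolynomial (Fin n) k) M] (gr : ℕ → Submodule k M) : Prop :=
  DirectSum.IsInternal gr ∧
    ∀ (i j : ℕ) (r : MvPolynomial (Fin n) k), r ∈ homogeneousSubmodule (Fin n) k i →
      ∀ x ∈ gr j, r • x ∈ gr (i + j)

/-- The scalar `z` satisfies the strong Lefschetz condition for the grading `gr`:
for all nonnegative `a` and `d`, multiplication by `z ^ a` maps `gr d` to `gr (d + a)`
injectively or surjectively. -/
def IsSLAction {k A T : Type*} [Field k] [CommRing A] [AddCommGroup T] [Module k T]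
    [Module A T] (gr : ℕ → Submodule k T) (z : A) : Prop :=
  ∀ a d : ℕ, (∀ x ∈ gr d, z ^ a • x = 0 → x = 0) ∨
    (∀ w ∈ gr (d + a), ∃ x ∈ gr d, z ^ a • x = w)

/-- The data `(iv α, dv α, e α)` exhibits a degree-zero decomposition
`T ≅ ⊕_α k[z](-(iv α))/(z^(dv α))` of the graded module `T` as a graded `k[z]`-module:
each `e α` is homogeneous of degree `iv α`, is killed by `z ^ dv α`, the elements
`z ^ j • e α` (`j < dv α`) are homogeneous of degree `iv α + j` and form a `k`-basis of `T`. -/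
def IsDecomp {k A T : Type*} [Field k] [CommRing A] [AddCommGroup T] [Module k T]
    [Module A T] (gr : ℕ → Submodule k T) (z : A) {Λ : Type*} (iv dv : Λ → ℕ)
    (e : Λ → T) : Prop :=
  (∀ α, 1 ≤ dv α) ∧ (∀ (α : Λ) (j : ℕ), j < dv α → z ^ j • e α ∈ gr (iv α + j)) ∧
    (∀ α, z ^ dv α • e α = 0) ∧
    LinearIndependent k (fun q : Σ α : Λ, Fin (dv α) => z ^ (q.2 : ℕ) • e q.1) ∧
    Submodule.span k (Set.range (fun q : Σ α : Λ, Fin (dv α) => z ^ (q.2 : ℕ) • e q.1)) = ⊤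

/-- `p` is the socle degree of the graded module with grading `gr`:
the largest degree in which the module is nonzero. -/
def IsSocleDegree {k T : Type*} [Field k] [AddCommGroup T] [Module k T]
    (gr : ℕ → Submodule k T) (p : ℕ) : Prop :=
  gr p ≠ ⊥ ∧ ∀ e : ℕ, p < e → gr e = ⊥

/-- The partial order on the cyclic summands of a decomposition:
`S_β ⪯ S_α` iff `iv α ≤ iv β` and `dv β + iv β ≤ dv α + iv α`. -/
def Prec {Λ : Type*} (iv dv : Λ → ℕ) (β α : Λ) : Prop :=
  iv α ≤ iv β ∧ dv β + iv β ≤ dv α + iv α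

/-- A decomposition with data `(iv, dv)` is almost centered if whenever `S_β ⪯ S_α` one has
`|L_{αβ} - R_{αβ}| ≤ 1`, where `L_{αβ} = iv β - iv α` and
`R_{αβ} = (dv α + iv α) - (dv β + iv β)`. -/
def AlmostCentered {Λ : Type*} (iv dv : Λ → ℕ) : Prop :=
  ∀ α β : Λ, Prec iv dv β α →
    |((iv β : ℤ) - (iv α : ℤ)) - (((dv α : ℤ) + (iv α : ℤ)) - ((dv β : ℤ) + (iv β : ℤ)))| ≤ 1

/-- The strong Lefschetz condition for an endomorphism `f` (the action of a scalar on a module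
realized as an endomorphism): for all nonnegative `a` and `d`, the map `f ^ a` sends `gr d`
to `gr (d + a)` injectively or surjectively. -/
def IsSLEnd {k T : Type*} [Field k] [AddCommGroup T] [Module k T]
    (gr : ℕ → Submodule k T) (f : Module.End k T) : Prop :=
  ∀ a d : ℕ, (∀ x ∈ gr d, (f ^ a) x = 0 → x = 0) ∨
    (∀ w ∈ gr (d + a), ∃ x ∈ gr d, (f ^ a) x = w)

/-- A degree-zero decomposition `T ≅ ⊕_α k[z](-(iv α))/(z^(dv α))` of `T` as a graded
`k[z]`-module, where `z` acts via the endomorphism `f`. -/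
def IsDecompEnd {k T : Type*} [Field k] [AddCommGroup T] [Module k T]
    (gr : ℕ → Submodule k T) (f : Module.End k T) {Λ : Type*} (iv dv : Λ → ℕ)
    (e : Λ → T) : Prop :=
  (∀ α, 1 ≤ dv α) ∧ (∀ (α : Λ) (j : ℕ), j < dv α → (f ^ j) (e α) ∈ gr (iv α + j)) ∧
    (∀ α, (f ^ dv α) (e α) = 0) ∧
    LinearIndependent k (fun q : Σ α : Λ, Fin (dv α) => (f ^ (q.2 : ℕ)) (e q.1)) ∧
    Submodule.span k (Set.range (fun q : Σ α : Λ, Fin (dv α) => (f ^ (q.2 : ℕ)) (e q.1))) = ⊤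

/-- The total-degree grading on `M ⊗_k N`: the degree `e` piece is spanned by the tensors
`x ⊗ y` with `x, y` homogeneous of degrees summing to `e`. -/
def tensorGr {k : Type*} [Field k] {M N : Type*} [AddCommGroup M] [Module k M]
    [AddCommGroup N] [Module k N] (grM : ℕ → Submodule k M) (grN : ℕ → Submodule k N)
    (e : ℕ) : Submodule k (M ⊗[k] N) :=
  Submodule.span k {t | ∃ (d₁ d₂ : ℕ) (x : M) (y : N), d₁ + d₂ = e ∧ x ∈ grM d₁ ∧
    y ∈ grN d₂ ∧ t = x ⊗ₜ[k] y}

/-- The action of the ring `R ⊗_k R` on `M ⊗_k N`, where the first factor acts on `M` and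
the second on `N`, realized as a `k`-algebra homomorphism into the endomorphisms. -/
noncomputable def tensorAct (k : Type*) [Field k] {n : ℕ} (M N : Type*) [AddCommGroup M]
    [Module k M] [Module (MvPolynomial (Fin n) k) M]
    [IsScalarTower k (MvPolynomial (Fin n) k) M]
    [AddCommGroup N] [Module k N] [Module (MvPolynomial (Fin n) k) N]
    [IsScalarTower k (MvPolynomial (Fin n) k) N] :
    (MvPolynomial (Fin n) k) ⊗[k] (MvPolynomial (Fin n) k) →ₐ[k]
      Module.End k (M ⊗[k] N) :=
  (Module.endTensorEndAlgHom (R := k) (S := k) (A := k)).comp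
    (Algebra.TensorProduct.map (Algebra.lsmul k k M (A := MvPolynomial (Fin n) k))
      (Algebra.lsmul k k N (A := MvPolynomial (Fin n) k)))

/-- Linear forms of `R ⊗_k R`: elements `r ⊗ 1 + 1 ⊗ s` with `r, s` linear forms of `R`. -/
def IsLinearForm2 {k : Type*} [Field k] {n : ℕ}
    (w : (MvPolynomial (Fin n) k) ⊗[k] (MvPolynomial (Fin n) k)) : Prop :=
  ∃ r s : MvPolynomial (Fin n) k, r ∈ homogeneousSubmodule (Fin n) k 1 ∧
    s ∈ homogeneousSubmodule (Fin n) k 1 ∧ w = r ⊗ₜ[k] (1 : MvPolynomial (Fin n) k) +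
      (1 : MvPolynomial (Fin n) k) ⊗ₜ[k] s

/-!
A decomposition of a graded `k[z]`-module into strings `e, z e, …, z^(d-1) e` turns `z` into the
raising operator of an action of `𝔰𝔩₂` on each string. The Leibniz rule makes the tensor product of
two strings an `𝔰𝔩₂`-module with raising operator `l ⊗ 1 + 1 ⊗ y`, whose powers are therefore
injective when they end no further above the centre than they start below it, and surjective in the
opposite case; the integers inverted on the way are at most `s + t`, hence nonzero in `k`.

It remains to compare the centres of the different blocks. Symmetry of the Hilbert function makes
`l^(s-2d) : M_d → M_(s-d)` bijective, so all strings of `M` are centred at `s / 2`. For `N`, the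
strong Lefschetz property forbids a string from both starting and ending strictly before another
one, so any two strings are comparable for `⪯`, and being almost centered bounds the difference of
their centres by `1 / 2`. Since the degrees involved are integers, a power starting in a given
degree is then injective on all blocks at once or surjective on all of them.
-/

theorem eq_of_iSupIndep_of_le_of_iSup_eq_top {ι α : Type*} [CompleteLattice α] [IsModularLattice α]
    {s t : ι → α} (ht : iSupIndep t) (hst : s ≤ t) (hs : ⨆ i, s i = ⊤) : s = t := by
  funext i
  refine eq_of_le_of_inf_le_of_sup_le (z := ⨆ (j) (_ : j ≠ i), s j) (hst i) ?_ ?_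
  · have hdisj : t i ⊓ ⨆ (j) (_ : j ≠ i), s j = ⊥ :=
      ((ht i).mono_right (iSup₂_mono fun j _ => hst j)).eq_bot
    exact hdisj.trans_le bot_le
  · rw [← iSup_split_single s i, hs]
    exact le_top

section Powers

variable {k W : Type*} [Semiring k] [AddCommMonoid W] [Module k W]

theorem pow_apply_mem_of_apply_mem {V : ℕ → Submodule k W} {X : Module.End k W}
    (hX : ∀ d, ∀ v ∈ V d, X v ∈ V (d + 1)) {d : ℕ} {v : W} (hv : v ∈ V d) (a : ℕ) :
    (X ^ a) v ∈ V (d + a) := by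
  induction a with
  | zero => simpa using hv
  | succ a ih =>
    rw [pow_succ', Module.End.mul_apply]
    exact hX _ _ ih

theorem pow_apply_eq_zero_of_le {X : Module.End k W} {v : W} {a b : ℕ} (hab : a ≤ b)
    (h : (X ^ a) v = 0) : (X ^ b) v = 0 := by
  obtain ⟨c, rfl⟩ := Nat.exists_eq_add_of_le' hab
  rw [pow_add, Module.End.mul_apply, h, map_zero]

end Powers

theorem intCast_ne_zero_of_natAbs_le {R : Type*} [Ring R] {n : ℕ}
    (hR : ∀ m : ℕ, 0 < m → m ≤ n → (m : R) ≠ 0) {z : ℤ} (hz : z ≠ 0) (hzn : z.natAbs ≤ n) :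
    (z : R) ≠ 0 := by
  have habs := hR z.natAbs (Int.natAbs_pos.2 hz) hzn
  rcases Int.natAbs_eq z with h | h <;> rw [h] <;> simpa using habs

section Sl2

variable {k W : Type*} [Field k] [AddCommGroup W] [Module k W]

/-- A graded family of subspaces, concentrated in degrees `b, …, t`, on which the raising operator
`X` and the lowering operator `Y` satisfy the `𝔰𝔩₂` relation `[X, Y] = H`, where `H` acts on the
degree `d` piece by the weight `2 d - (b + t)`. The pieces need not fill up the ambient space. -/
structure IsSl2Graded (V : ℕ → Submodule k W) (X Y : Module.End k W) (b t : ℕ) : Prop where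
  raise_mem : ∀ d, ∀ v ∈ V d, X v ∈ V (d + 1)
  lower_mem : ∀ d, ∀ v ∈ V (d + 1), Y v ∈ V d
  lower_eq_zero : ∀ v ∈ V 0, Y v = 0
  raise_lower : ∀ d, ∀ v ∈ V d, X (Y v) = Y (X v) + (2 * d - b - t : ℤ) • v
  eq_bot_of_lt : ∀ d, d < b → V d = ⊥
  eq_bot_of_gt : ∀ d, t < d → V d = ⊥

namespace IsSl2Graded

variable {V : ℕ → Submodule k W} {X Y : Module.End k W} {b t : ℕ}

theorem pow_raise_lower (h : IsSl2Graded V X Y b t) {d : ℕ} {v : W} (hv : v ∈ V d) (a : ℕ) :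
    (X ^ (a + 1)) (Y v) =
      Y ((X ^ (a + 1)) v) + ((a + 1) * (2 * d + a - b - t) : ℤ) • (X ^ a) v := by
  induction a with
  | zero => simpa using h.raise_lower d v hv
  | succ a ih =>
    have hXv := h.raise_lower _ _ (pow_apply_mem_of_apply_mem h.raise_mem hv (a + 1))
    rw [pow_succ', Module.End.mul_apply, ih, map_add, map_zsmul, hXv, ← Module.End.mul_apply X,
      ← Module.End.mul_apply X, ← pow_succ', ← pow_succ', add_assoc, ← add_smul]
    congr 2
    push_cast
    ring

theorem eq_zero_of_pow_raise_eq_zero (h : IsSl2Graded V X Y b t)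
    (hk : ∀ m : ℕ, 0 < m → m ≤ t - b → (m : k) ≠ 0) {a d : ℕ} (had : 2 * d + a ≤ b + t)
    {v : W} (hv : v ∈ V d) (hXv : (X ^ a) v = 0) : v = 0 := by
  by_cases hdb : d < b
  · simpa [h.eq_bot_of_lt d hdb] using hv
  cases a with
  | zero => simpa using hXv
  | succ a =>
    have hYv : Y v = 0 := by
      cases d with
      | zero => exact h.lower_eq_zero v hv
      | succ d =>
        refine h.eq_zero_of_pow_raise_eq_zero hk (a := a + 2) (by omega) (h.lower_mem d v hv) ?_
        rw [h.pow_raise_lower hv, pow_apply_eq_zero_of_le (Nat.le_succ _) hXv, hXv, map_zero,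
          smul_zero, add_zero]
    have hcomm := h.pow_raise_lower hv a
    rw [hXv, hYv, map_zero, map_zero, zero_add, ← Int.cast_smul_eq_zsmul k, Int.cast_mul] at hcomm
    refine h.eq_zero_of_pow_raise_eq_zero hk (a := a) (by omega) hv
      ((smul_eq_zero.1 hcomm.symm).resolve_left (mul_ne_zero ?_ ?_)) <;>
      exact intCast_ne_zero_of_natAbs_le hk (by omega) (by omega)
  termination_by (d, a)

/-
Pushing `w` up, lifting `X w` from degree `d`, and correcting by an `X`-torsion term `z`: the
commutator formula turns `Y z` into a nonzero multiple of the remaining error.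
-/
theorem exists_pow_raise_eq (h : IsSl2Graded V X Y b t)
    (hk : ∀ m : ℕ, 0 < m → m ≤ t - b → (m : k) ≠ 0) {a d : ℕ} (had : b + t ≤ 2 * d + a)
    {w : W} (hw : w ∈ V (d + a)) : ∃ v ∈ V d, (X ^ a) v = w := by
  by_cases hdt : t < d + a
  · rw [h.eq_bot_of_gt _ hdt, Submodule.mem_bot] at hw
    exact ⟨0, zero_mem _, by rw [hw, map_zero]⟩
  cases a with
  | zero => exact ⟨w, hw, by simp⟩
  | succ a =>
    obtain ⟨u, hu, huw⟩ := h.exists_pow_raise_eq hk (a := a) (d := d + 1) (by omega)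
      (by rwa [add_assoc, add_comm 1])
    obtain ⟨v, hv, hvw⟩ := h.exists_pow_raise_eq hk (a := a + 2) (d := d) (by omega)
      (h.raise_mem _ _ hw)
    have hz : u - X v ∈ V (d + 1) := sub_mem hu (h.raise_mem d v hv)
    have hXz : (X ^ (a + 1)) (u - X v) = 0 := by
      rw [map_sub, ← Module.End.mul_apply _ X, ← pow_succ, hvw, pow_succ', Module.End.mul_apply,
        huw, sub_self]
    have hcomm := h.pow_raise_lower hz a
    rw [hXz, map_zero, zero_add, map_sub (X ^ a), huw, ← Module.End.mul_apply _ X, ← pow_succ,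
      ← Int.cast_smul_eq_zsmul k, Int.cast_mul] at hcomm
    set c : k := ((a + 1 : ℤ) : k) * ((2 * (d + 1 : ℕ) + a - b - t : ℤ) : k)
    have hc0 : c ≠ 0 := by
      refine mul_ne_zero ?_ ?_ <;> exact intCast_ne_zero_of_natAbs_le hk (by omega) (by omega)
    refine ⟨v + c⁻¹ • Y (u - X v), add_mem hv (Submodule.smul_mem _ _ (h.lower_mem d _ hz)), ?_⟩
    rw [map_add, map_smul, hcomm, inv_smul_smul₀ hc0, add_sub_cancel]
  termination_by 2 * (t + 1 - (d + a)) + a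

end IsSl2Graded
end Sl2

section TensorGrading

variable {k M N : Type*} [Field k] [AddCommGroup M] [Module k M] [AddCommGroup N] [Module k N]
  {V : ℕ → Submodule k M} {V' : ℕ → Submodule k N}

theorem tmul_mem_tensorGr {i j : ℕ} {x : M} {y : N} (hx : x ∈ V i) (hy : y ∈ V' j) :
    x ⊗ₜ[k] y ∈ tensorGr V V' (i + j) :=
  Submodule.subset_span ⟨i, j, x, y, rfl, hx, hy, rfl⟩

theorem tensorGr_le {d : ℕ} {P : Submodule k (M ⊗[k] N)}
    (h : ∀ i j, i + j = d → ∀ x ∈ V i, ∀ y ∈ V' j, x ⊗ₜ[k] y ∈ P) : tensorGr V V' d ≤ P := by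
  rw [tensorGr, Submodule.span_le]
  rintro _ ⟨i, j, x, y, hij, hx, hy, rfl⟩
  exact h i j hij x hx y hy

theorem tensorGr_eq_bot {d : ℕ} (h : ∀ i j, i + j = d → V i = ⊥ ∨ V' j = ⊥) :
    tensorGr V V' d = ⊥ := by
  refine eq_bot_iff.2 (tensorGr_le fun i j hij x hx y hy => ?_)
  rcases h i j hij with hi | hj
  · rw [hi, Submodule.mem_bot] at hx
    simp [hx]
  · rw [hj, Submodule.mem_bot] at hy
    simp [hy]

namespace IsSl2Graded

variable {X Y : Module.End k M} {X' Y' : Module.End k N} {b t b' t' : ℕ}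

theorem tensor_lower_mem (h : IsSl2Graded V X Y b t) (h' : IsSl2Graded V' X' Y' b' t') (d : ℕ) :
    ∀ v ∈ tensorGr V V' (d + 1), (Y.rTensor N + Y'.lTensor M) v ∈ tensorGr V V' d := by
  change _ ≤ (tensorGr V V' d).comap _
  refine tensorGr_le ?_
  rintro i j hij x hx y hy
  have hl : Y x ⊗ₜ[k] y ∈ tensorGr V V' d := by
    cases i with
    | zero => simp [h.lower_eq_zero x hx]
    | succ i =>
      convert tmul_mem_tensorGr (h.lower_mem i x hx) hy using 2
      omega
  have hr : x ⊗ₜ[k] Y' y ∈ tensorGr V V' d := by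
    cases j with
    | zero => simp [h'.lower_eq_zero y hy]
    | succ j =>
      convert tmul_mem_tensorGr hx (h'.lower_mem j y hy) using 2
      omega
  exact add_mem hl hr

theorem tensor_raise_lower (h : IsSl2Graded V X Y b t) (h' : IsSl2Graded V' X' Y' b' t') (d : ℕ) :
    ∀ v ∈ tensorGr V V' d,
      (X.rTensor N + X'.lTensor M) ((Y.rTensor N + Y'.lTensor M) v) =
        (Y.rTensor N + Y'.lTensor M) ((X.rTensor N + X'.lTensor M) v) +
          (2 * d - (b + b' : ℕ) - (t + t' : ℕ) : ℤ) • v := by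
  change _ ≤ LinearMap.eqLocus
    ((X.rTensor N + X'.lTensor M) ∘ₗ (Y.rTensor N + Y'.lTensor M))
    ((Y.rTensor N + Y'.lTensor M) ∘ₗ (X.rTensor N + X'.lTensor M) +
      (2 * d - (b + b' : ℕ) - (t + t' : ℕ) : ℤ) • LinearMap.id)
  refine tensorGr_le ?_
  rintro i j rfl x hx y hy
  simp only [LinearMap.mem_eqLocus, LinearMap.comp_apply, LinearMap.add_apply,
    LinearMap.smul_apply, LinearMap.id_apply, map_add, LinearMap.rTensor_tmul,
    LinearMap.lTensor_tmul, h.raise_lower i x hx, h'.raise_lower j y hy, add_tmul, tmul_add,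
    ← smul_tmul', tmul_smul]
  push_cast
  module

theorem tensor (h : IsSl2Graded V X Y b t) (h' : IsSl2Graded V' X' Y' b' t') :
    IsSl2Graded (tensorGr V V') (X.rTensor N + X'.lTensor M) (Y.rTensor N + Y'.lTensor M)
      (b + b') (t + t') where
  raise_mem d := by
    change _ ≤ (tensorGr V V' (d + 1)).comap _
    refine tensorGr_le ?_
    rintro i j rfl x hx y hy
    have hl := tmul_mem_tensorGr (h.raise_mem i x hx) hy
    have hr := tmul_mem_tensorGr hx (h'.raise_mem j y hy)
    rw [add_right_comm] at hl
    exact add_mem hl hr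
  lower_mem := h.tensor_lower_mem h'
  lower_eq_zero := by
    change _ ≤ LinearMap.ker _
    refine tensorGr_le ?_
    rintro i j hij x hx y hy
    obtain ⟨rfl, rfl⟩ := Nat.add_eq_zero_iff.1 hij
    simp [h.lower_eq_zero x hx, h'.lower_eq_zero y hy]
  raise_lower := h.tensor_raise_lower h'
  eq_bot_of_lt d hd := tensorGr_eq_bot fun i j hij => by
    rcases (by omega : i < b ∨ j < b') with hi | hj
    exacts [.inl (h.eq_bot_of_lt i hi), .inr (h'.eq_bot_of_lt j hj)]
  eq_bot_of_gt d hd := tensorGr_eq_bot fun i j hij => by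
    rcases (by omega : t < i ∨ t' < j) with hi | hj
    exacts [.inl (h.eq_bot_of_gt i hi), .inr (h'.eq_bot_of_gt j hj)]

end IsSl2Graded

end TensorGrading

section Strings

variable {k W : Type*} [Field k] [AddCommGroup W] [Module k W]

/-- The graded `k[g]`-submodule generated by an element `x` placed in degree `i`: its degree `d`
piece is spanned by `(g ^ (d - i)) x`, and is zero for `d < i`. -/
def stringGr (g : Module.End k W) (x : W) (i d : ℕ) : Submodule k W :=
  Submodule.span k {v | ∃ j, i + j = d ∧ (g ^ j) x = v}

variable {g : Module.End k W} {x : W} {i d : ℕ}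

theorem pow_apply_mem_stringGr (j : ℕ) : (g ^ j) x ∈ stringGr g x i (i + j) :=
  Submodule.subset_span ⟨j, rfl, rfl⟩

theorem stringGr_le {P : Submodule k W} (h : ∀ j, i + j = d → (g ^ j) x ∈ P) :
    stringGr g x i d ≤ P := by
  rw [stringGr, Submodule.span_le]
  rintro _ ⟨j, hj, rfl⟩
  exact h j hj

theorem raise_lower_of_mem_stringGr {Y : Module.End k W} {L : ℕ} (hL : 1 ≤ L) (hY₀ : Y x = 0)
    (hY : ∀ j : ℕ, Y ((g ^ (j + 1)) x) = ((j + 1) * (L - (j + 1)) : ℤ) • (g ^ j) x) :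
    ∀ v ∈ stringGr g x i d, g (Y v) = Y (g v) + (2 * d - i - (i + L - 1 : ℕ) : ℤ) • v := by
  change _ ≤ LinearMap.eqLocus (g ∘ₗ Y)
    (Y ∘ₗ g + (2 * d - i - (i + L - 1 : ℕ) : ℤ) • LinearMap.id)
  refine stringGr_le ?_
  rintro j rfl
  simp only [LinearMap.mem_eqLocus, LinearMap.comp_apply, LinearMap.add_apply,
    LinearMap.smul_apply, LinearMap.id_apply]
  rw [← Module.End.mul_apply g (g ^ j), ← pow_succ', hY, ← add_smul]
  cases j with
  | zero =>
    rw [pow_zero, Module.End.one_apply, hY₀, map_zero, eq_comm]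
    convert zero_smul ℤ x
    push_cast [Nat.cast_sub (by omega : 1 ≤ i + L)]
    ring
  | succ j =>
    rw [hY, map_zsmul, ← Module.End.mul_apply g, ← pow_succ']
    congr 1
    push_cast [Nat.cast_sub (by omega : 1 ≤ i + L)]
    ring

theorem isSl2Graded_stringGr {Y : Module.End k W} {L : ℕ} (hL : 1 ≤ L) (hx : (g ^ L) x = 0)
    (hY₀ : Y x = 0)
    (hY : ∀ j : ℕ, Y ((g ^ (j + 1)) x) = ((j + 1) * (L - (j + 1)) : ℤ) • (g ^ j) x) :
    IsSl2Graded (stringGr g x i) g Y i (i + L - 1) where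
  raise_mem d := by
    change _ ≤ (stringGr g x i (d + 1)).comap _
    refine stringGr_le ?_
    rintro j rfl
    rw [Submodule.mem_comap, ← Module.End.mul_apply, ← pow_succ']
    exact pow_apply_mem_stringGr (j + 1)
  lower_mem d := by
    change _ ≤ (stringGr g x i d).comap _
    refine stringGr_le fun j hj => ?_
    cases j with
    | zero => simp [hY₀]
    | succ j =>
      obtain rfl : d = i + j := by omega
      rw [Submodule.mem_comap, hY]
      exact zsmul_mem (pow_apply_mem_stringGr j) _
  lower_eq_zero := by
    change _ ≤ LinearMap.ker _
    refine stringGr_le fun j hj => ?_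
    obtain ⟨-, rfl⟩ := Nat.add_eq_zero_iff.1 hj
    simpa using hY₀
  raise_lower _ := raise_lower_of_mem_stringGr hL hY₀ hY
  eq_bot_of_lt d hd := eq_bot_iff.2 (stringGr_le fun j hj => by omega)
  eq_bot_of_gt d hd := by
    refine eq_bot_iff.2 (stringGr_le fun j hj => ?_)
    exact pow_apply_eq_zero_of_le (by omega) hx

end Strings

section JointInjectivity

variable {k M N : Type*} [CommRing k] [AddCommGroup M] [Module k M] [AddCommGroup N] [Module k N]

theorem eq_zero_of_forall_lTensor_eq_zero [Module.Free k M] {ι : Type*} {φ : ι → Module.End k N}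
    (hφ : ∀ y, (∀ i, φ i y = 0) → y = 0) {x : M ⊗[k] N}
    (hx : ∀ i, (φ i).lTensor M x = 0) : x = 0 := by
  classical
  let coords := TensorProduct.equivFinsuppOfBasisLeft (N := N) (Module.Free.chooseBasis k M)
  have hcoords (i) (z : M ⊗[k] N) (q) : coords ((φ i).lTensor M z) q = φ i (coords z q) := by
    induction z with
    | zero => simp
    | tmul m n => simp [coords]
    | add z z' hz hz' => simp [hz, hz']
  rw [← coords.map_eq_zero_iff]
  ext q
  exact hφ _ fun i => by rw [← hcoords, hx, map_zero, Finsupp.zero_apply]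

theorem eq_zero_of_forall_rTensor_eq_zero [Module.Free k N] {ι : Type*} {φ : ι → Module.End k M}
    (hφ : ∀ x, (∀ i, φ i x = 0) → x = 0) {x : M ⊗[k] N}
    (hx : ∀ i, (φ i).rTensor N x = 0) : x = 0 := by
  rw [← (TensorProduct.comm k M N).map_eq_zero_iff]
  refine eq_zero_of_forall_lTensor_eq_zero hφ fun i => ?_
  rw [← LinearMap.comm_comp_rTensor_comp_comm_eq]
  simp [hx]

end JointInjectivity

section Sl2Decomposition

variable {k W M N : Type*} [Field k] [AddCommGroup W] [Module k W] [AddCommGroup M] [Module k M]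
  [AddCommGroup N] [Module k N]

/-- A decomposition of the grading `gr` into blocks `V i`, indexed by an arbitrary type, each of
which carries an `𝔰𝔩₂`-action with raising operator `X` and lives in degrees `b i, …, t i`. The
projections `π i` onto the blocks are part of the data; their joint injectivity makes the sum of
the blocks direct. -/
structure IsSl2Decomposition (gr : ℕ → Submodule k W) (X : Module.End k W) {ι : Type*}
    (V : ι → ℕ → Submodule k W) (π : ι → Module.End k W) (b t : ι → ℕ) : Prop where
  exists_lower : ∀ i, ∃ Y, IsSl2Graded (V i) X Y (b i) (t i)
  gr_eq_iSup : ∀ d, gr d = ⨆ i, V i d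
  proj_raise : ∀ i v, π i (X v) = X (π i v)
  proj_mem : ∀ i d, ∀ v ∈ gr d, π i v ∈ V i d
  eq_zero_of_proj : ∀ v, (∀ i, π i v = 0) → v = 0

namespace IsSl2Decomposition

variable {gr : ℕ → Submodule k W} {X : Module.End k W} {ι : Type*} {V : ι → ℕ → Submodule k W}
  {π : ι → Module.End k W} {b t : ι → ℕ}

theorem proj_pow_raise (h : IsSl2Decomposition gr X V π b t) (i : ι) (a : ℕ) (v : W) :
    π i ((X ^ a) v) = (X ^ a) (π i v) := by
  have hcomm : Commute (π i) X := LinearMap.ext (h.proj_raise i)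
  exact LinearMap.congr_fun (hcomm.pow_right a).eq v

theorem isSLEnd (h : IsSl2Decomposition gr X V π b t)
    (hk : ∀ i, ∀ m : ℕ, 0 < m → m ≤ t i - b i → (m : k) ≠ 0)
    (hcentre : ∀ i j, b i + t i ≤ b j + t j + 1) : IsSLEnd gr X := by
  intro a d
  by_cases hlow : ∀ i, 2 * d + a ≤ b i + t i
  · left
    intro v hv hXv
    refine h.eq_zero_of_proj v fun i => ?_
    obtain ⟨Y, hY⟩ := h.exists_lower i
    refine hY.eq_zero_of_pow_raise_eq_zero (hk i) (hlow i) (h.proj_mem i d v hv) ?_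
    rw [← h.proj_pow_raise, hXv, map_zero]
  · right
    obtain ⟨i, hi⟩ := not_forall.1 hlow
    suffices gr (d + a) ≤ (gr d).map (X ^ a) from this
    rw [h.gr_eq_iSup (d + a), iSup_le_iff]
    intro j w hw
    obtain ⟨Y, hY⟩ := h.exists_lower j
    obtain ⟨v, hv, hvw⟩ := hY.exists_pow_raise_eq (hk j)
      (by have := hcentre j i; omega : b j + t j ≤ 2 * d + a) hw
    exact ⟨v, (h.gr_eq_iSup d).ge (Submodule.mem_iSup_of_mem j hv), hvw⟩

theorem tensor {grM : ℕ → Submodule k M} {grN : ℕ → Submodule k N} {X : Module.End k M}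
    {X' : Module.End k N} {ι ι' : Type*} {V : ι → ℕ → Submodule k M} {V' : ι' → ℕ → Submodule k N}
    {π : ι → Module.End k M} {π' : ι' → Module.End k N} {b t : ι → ℕ} {b' t' : ι' → ℕ}
    (h : IsSl2Decomposition grM X V π b t) (h' : IsSl2Decomposition grN X' V' π' b' t') :
    IsSl2Decomposition (tensorGr grM grN) (X.rTensor N + X'.lTensor M)
      (fun q : ι × ι' => tensorGr (V q.1) (V' q.2))
      (fun q => TensorProduct.map (π q.1) (π' q.2))
      (fun q => b q.1 + b' q.2) (fun q => t q.1 + t' q.2) where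
  exists_lower q := by
    obtain ⟨Y, hY⟩ := h.exists_lower q.1
    obtain ⟨Y', hY'⟩ := h'.exists_lower q.2
    exact ⟨_, hY.tensor hY'⟩
  gr_eq_iSup d := by
    refine le_antisymm (tensorGr_le ?_) (iSup_le fun q => tensorGr_le ?_)
    · rintro i j rfl x hx y hy
      rw [h.gr_eq_iSup] at hx
      rw [h'.gr_eq_iSup] at hy
      refine (?_ : Submodule.map₂ (TensorProduct.mk k M N) (⨆ α, V α i) (⨆ β, V' β j) ≤ _)
        (Submodule.apply_mem_map₂ _ hx hy)
      simp only [Submodule.map₂_iSup_left, Submodule.map₂_iSup_right, iSup_le_iff,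
        Submodule.map₂_le]
      exact fun β α x hx y hy => Submodule.mem_iSup_of_mem (α, β) (tmul_mem_tensorGr hx hy)
    · rintro i j rfl x hx y hy
      exact tmul_mem_tensorGr ((h.gr_eq_iSup i).ge (Submodule.mem_iSup_of_mem _ hx))
        ((h'.gr_eq_iSup j).ge (Submodule.mem_iSup_of_mem _ hy))
  proj_raise q v := by
    induction v with
    | zero => simp
    | tmul x y => simp [h.proj_raise, h'.proj_raise]
    | add v w hv hw => simp only [map_add, hv, hw]
  proj_mem q d := by
    change _ ≤ (tensorGr (V q.1) (V' q.2) d).comap _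
    refine tensorGr_le ?_
    rintro i j rfl x hx y hy
    exact tmul_mem_tensorGr (h.proj_mem _ _ x hx) (h'.proj_mem _ _ y hy)
  eq_zero_of_proj v hv := by
    refine eq_zero_of_forall_rTensor_eq_zero h.eq_zero_of_proj fun α => ?_
    refine eq_zero_of_forall_lTensor_eq_zero h'.eq_zero_of_proj fun β => ?_
    simpa only [← LinearMap.comp_apply, LinearMap.lTensor_comp_rTensor] using hv (α, β)

end IsSl2Decomposition

end Sl2Decomposition

namespace IsDecompEnd

variable {k T : Type*} [Field k] [AddCommGroup T] [Module k T] {gr : ℕ → Submodule k T}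
  {g : Module.End k T} {Λ : Type*} {iv dv : Λ → ℕ} {e : Λ → T}

/-- The homogeneous basis of all `(g ^ j) (e α)` with `j < dv α`. -/
noncomputable def basis (h : IsDecompEnd gr g iv dv e) :
    Module.Basis (Σ α : Λ, Fin (dv α)) k T :=
  Module.Basis.mk h.2.2.2.1 h.2.2.2.2.ge

theorem basis_mk (h : IsDecompEnd gr g iv dv e) {α : Λ} {j : ℕ} (hj : j < dv α) :
    h.basis ⟨α, j, hj⟩ = (g ^ j) (e α) :=
  Module.Basis.mk_apply ..

theorem pow_apply_eq_zero (h : IsDecompEnd gr g iv dv e) {α : Λ} {j : ℕ} (hj : dv α ≤ j) :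
    (g ^ j) (e α) = 0 :=
  pow_apply_eq_zero_of_le hj (h.2.2.1 α)

theorem pow_apply_mem (h : IsDecompEnd gr g iv dv e) (α : Λ) (j : ℕ) :
    (g ^ j) (e α) ∈ gr (iv α + j) := by
  by_cases hj : j < dv α
  · exact h.2.1 α j hj
  · simp [h.pow_apply_eq_zero (not_lt.1 hj)]

theorem stringGr_le_grading (h : IsDecompEnd gr g iv dv e) (α : Λ) (d : ℕ) :
    stringGr g (e α) (iv α) d ≤ gr d :=
  stringGr_le fun j hj => hj ▸ h.pow_apply_mem α j

theorem gr_eq_iSup_stringGr (h : IsDecompEnd gr g iv dv e) (hgr : DirectSum.IsInternal gr)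
    (d : ℕ) : gr d = ⨆ α, stringGr g (e α) (iv α) d := by
  suffices (fun d => ⨆ α, stringGr g (e α) (iv α) d) = gr from (congrFun this d).symm
  refine eq_of_iSupIndep_of_le_of_iSup_eq_top hgr.submodule_iSupIndep
    (fun d => iSup_le fun α => h.stringGr_le_grading α d) (top_unique ?_)
  rw [← h.2.2.2.2, Submodule.span_le]
  rintro _ ⟨q, rfl⟩
  exact Submodule.mem_iSup_of_mem _ (Submodule.mem_iSup_of_mem q.1 (pow_apply_mem_stringGr _))

/-- The lowering operator acting on each string as in the irreducible `𝔰𝔩₂`-representation of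
dimension `dv α`. -/
noncomputable def lower (h : IsDecompEnd gr g iv dv e) : Module.End k T :=
  h.basis.constr k fun q => (q.2 * (dv q.1 - q.2) : ℤ) • (g ^ (q.2 - 1 : ℕ)) (e q.1)

theorem lower_apply (h : IsDecompEnd gr g iv dv e) (α : Λ) : h.lower (e α) = 0 := by
  have hbasis := h.basis_mk (h.1 α)
  rw [pow_zero, Module.End.one_apply] at hbasis
  rw [← hbasis, lower, Module.Basis.constr_basis]
  simp

theorem lower_pow_succ_apply (h : IsDecompEnd gr g iv dv e) (α : Λ) (j : ℕ) :
    h.lower ((g ^ (j + 1)) (e α)) = ((j + 1) * (dv α - (j + 1)) : ℤ) • (g ^ j) (e α) := by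
  rcases lt_trichotomy (j + 1) (dv α) with hj | hj | hj
  · rw [← h.basis_mk hj, lower, Module.Basis.constr_basis]
    simp
  · simp [h.pow_apply_eq_zero hj.ge, ← hj]
  · rw [h.pow_apply_eq_zero hj.le, h.pow_apply_eq_zero (Nat.lt_succ_iff.1 hj), map_zero, smul_zero]

open Classical in
/-- The projection onto the string of `e α` along the other strings. -/
noncomputable def proj (h : IsDecompEnd gr g iv dv e) (α : Λ) : Module.End k T :=
  h.basis.constr k fun q => if q.1 = α then (g ^ (q.2 : ℕ)) (e q.1) else 0

theorem proj_pow_apply_self (h : IsDecompEnd gr g iv dv e) (α : Λ) (j : ℕ) :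
    h.proj α ((g ^ j) (e α)) = (g ^ j) (e α) := by
  by_cases hj : j < dv α
  · conv_lhs => rw [← h.basis_mk hj]
    simp [proj, Module.Basis.constr_basis]
  · simp [h.pow_apply_eq_zero (not_lt.1 hj)]

theorem proj_pow_apply_of_ne (h : IsDecompEnd gr g iv dv e) {α β : Λ} (hβ : β ≠ α) (j : ℕ) :
    h.proj α ((g ^ j) (e β)) = 0 := by
  by_cases hj : j < dv β
  · rw [← h.basis_mk hj]
    simp [proj, Module.Basis.constr_basis, hβ]
  · simp [h.pow_apply_eq_zero (not_lt.1 hj)]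

theorem proj_comp (h : IsDecompEnd gr g iv dv e) (α : Λ) : h.proj α ∘ₗ g = g ∘ₗ h.proj α := by
  refine h.basis.ext ?_
  rintro ⟨β, j, hj⟩
  rw [LinearMap.comp_apply, LinearMap.comp_apply, h.basis_mk, ← Module.End.mul_apply g, ← pow_succ']
  obtain rfl | hβ := eq_or_ne β α
  · rw [proj_pow_apply_self, proj_pow_apply_self, ← Module.End.mul_apply, ← pow_succ']
  · rw [h.proj_pow_apply_of_ne hβ, h.proj_pow_apply_of_ne hβ, map_zero]

theorem repr_proj (h : IsDecompEnd gr g iv dv e) (v : T) (q : Σ α : Λ, Fin (dv α)) :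
    h.basis.repr (h.proj q.1 v) q = h.basis.repr v q := by
  suffices h.basis.coord q ∘ₗ h.proj q.1 = h.basis.coord q from LinearMap.congr_fun this v
  refine h.basis.ext ?_
  rintro ⟨β, j, hj⟩
  rw [LinearMap.comp_apply]
  obtain ⟨α, i⟩ := q
  obtain rfl | hβ := eq_or_ne β α
  · rw [h.basis_mk, proj_pow_apply_self]
  · conv_lhs => rw [h.basis_mk, h.proj_pow_apply_of_ne hβ, map_zero]
    rw [Module.Basis.coord_apply, Module.Basis.repr_self, Finsupp.single_eq_of_ne]
    simp [Ne.symm hβ]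

theorem isSl2Decomposition (h : IsDecompEnd gr g iv dv e) (hgr : DirectSum.IsInternal gr) :
    IsSl2Decomposition gr g (fun α => stringGr g (e α) (iv α)) h.proj iv
      (fun α => iv α + dv α - 1) where
  exists_lower α := ⟨h.lower, isSl2Graded_stringGr (h.1 α) (h.2.2.1 α) (h.lower_apply α)
    (h.lower_pow_succ_apply α)⟩
  gr_eq_iSup := h.gr_eq_iSup_stringGr hgr
  proj_raise α v := LinearMap.congr_fun (h.proj_comp α) v
  proj_mem α d := by
    change gr d ≤ (stringGr g (e α) (iv α) d).comap _
    rw [h.gr_eq_iSup_stringGr hgr, iSup_le_iff]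
    refine fun β => stringGr_le ?_
    rintro j rfl
    obtain rfl | hβ := eq_or_ne β α
    · rw [Submodule.mem_comap, proj_pow_apply_self]
      exact pow_apply_mem_stringGr j
    · simp [h.proj_pow_apply_of_ne hβ]
  eq_zero_of_proj v hv := h.basis.ext_elem fun q => by
    rw [← h.repr_proj, hv, map_zero]

theorem pow_proj (h : IsDecompEnd gr g iv dv e) (α : Λ) (v : T) :
    (g ^ dv α) (h.proj α v) = 0 := by
  suffices (g ^ dv α) ∘ₗ h.proj α = 0 from LinearMap.congr_fun this v
  refine h.basis.ext ?_
  rintro ⟨β, j, hj⟩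
  rw [LinearMap.comp_apply, h.basis_mk, LinearMap.zero_apply]
  obtain rfl | hβ := eq_or_ne β α
  · rw [proj_pow_apply_self, ← Module.End.mul_apply, ← pow_add,
      h.pow_apply_eq_zero (Nat.le_add_right _ _)]
  · rw [h.proj_pow_apply_of_ne hβ, map_zero]

theorem pow_apply_ne_zero (h : IsDecompEnd gr g iv dv e) {α : Λ} {j : ℕ} (hj : j < dv α) :
    (g ^ j) (e α) ≠ 0 := by
  rw [← h.basis_mk hj]
  exact h.basis.ne_zero _

/-
With `a = (dv β + iv β - 1) - iv α`, the map `g ^ a` kills the bottom of the string `α` and misses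
the top of the string `β`.
-/
theorem le_of_isSLEnd_of_lt (h : IsDecompEnd gr g iv dv e) (hSL : IsSLEnd gr g) {α β : Λ}
    (hlt : iv α < iv β) : dv β + iv β ≤ dv α + iv α := by
  by_contra! hend
  have hβ := h.1 β
  obtain hinj | hsurj := hSL (dv β + iv β - 1 - iv α) (iv α)
  · have hmem : e α ∈ gr (iv α) := by simpa using h.pow_apply_mem α 0
    have hne : e α ≠ 0 := by simpa using h.pow_apply_ne_zero (h.1 α)
    exact hne (hinj _ hmem (h.pow_apply_eq_zero (by omega)))
  · have htop : (g ^ (dv β - 1)) (e β) ∈ gr (iv α + (dv β + iv β - 1 - iv α)) := by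
      convert h.pow_apply_mem β (dv β - 1) using 2
      omega
    obtain ⟨x, -, hx⟩ := hsurj _ htop
    have hcomm : Commute (h.proj β) g := h.proj_comp β
    have hproj : h.proj β ((g ^ (dv β - 1)) (e β)) = 0 := by
      rw [← hx, ← Module.End.mul_apply, (hcomm.pow_right _).eq, Module.End.mul_apply]
      exact pow_apply_eq_zero_of_le (by omega) (h.pow_proj β x)
    rw [proj_pow_apply_self] at hproj
    exact h.pow_apply_ne_zero (by omega) hproj

theorem centre_le_centre_add_one (h : IsDecompEnd gr g iv dv e) (hSL : IsSLEnd gr g)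
    (hac : AlmostCentered iv dv) (α β : Λ) : 2 * iv α + dv α ≤ 2 * iv β + dv β + 1 := by
  have hαβ := hac α β
  have hβα := hac β α
  have hgt := h.le_of_isSLEnd_of_lt hSL (α := β) (β := α)
  simp only [Prec, abs_le] at hαβ hβα
  omega

theorem add_le_of_eq_bot (h : IsDecompEnd gr g iv dv e) {t : ℕ} (ht : ∀ d, t < d → gr d = ⊥)
    (α : Λ) : iv α + dv α ≤ t + 1 := by
  by_contra! hlt
  have hmem := h.pow_apply_mem α (dv α - 1)
  have hdv := h.1 α
  rw [ht _ (by omega), Submodule.mem_bot] at hmem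
  exact h.pow_apply_ne_zero (by omega) hmem

end IsDecompEnd

section LinearIndependence

variable {k W : Type*} [Ring k] [AddCommGroup W] [Module k W]

/-
If `m` is the greatest value of `dv α - j` in the support of a relation, then `f ^ (m - 1)` kills
every term except those attaining `m`, which it sends to the tops of the strings.
-/
theorem linearIndependent_pow_apply {Λ : Type*} {f : Module.End k W} {dv : Λ → ℕ} {e : Λ → W}
    (hzero : ∀ α, (f ^ dv α) (e α) = 0)
    (htop : LinearIndependent k fun α => (f ^ (dv α - 1)) (e α)) :
    LinearIndependent k (fun q : Σ α : Λ, Fin (dv α) => (f ^ (q.2 : ℕ)) (e q.1)) := by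
  classical
  rw [linearIndependent_iff]
  intro c hc
  by_contra hne
  obtain ⟨q₀, hq₀, hmax⟩ := c.support.exists_max_image (fun q => dv q.1 - q.2)
    (Finsupp.support_nonempty_iff.2 hne)
  set m := dv q₀.1 - q₀.2
  set S := c.support.filter fun q => dv q.1 - q.2 = m
  have hindep : LinearIndepOn k (fun q : Σ α : Λ, Fin (dv α) => (f ^ (dv q.1 - 1)) (e q.1)) S := by
    refine htop.comp (fun q : S => q.1.1) ?_
    rintro ⟨⟨α, i⟩, hi⟩ ⟨⟨β, j⟩, hj⟩ (rfl : α = β)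
    have hi' := (Finset.mem_filter.1 hi).2
    have hj' := (Finset.mem_filter.1 hj).2
    obtain rfl : i = j := by ext; dsimp only at hi' hj'; omega
    rfl
  refine Finsupp.mem_support_iff.1 hq₀ (linearIndepOn_finset_iff.1 hindep c ?_ q₀
    (Finset.mem_filter.2 ⟨hq₀, rfl⟩))
  rw [← map_zero (f ^ (m - 1)), ← hc, Finsupp.linearCombination_apply, Finsupp.sum, map_sum,
    Finset.sum_filter]
  refine Finset.sum_congr rfl fun q hq => ?_
  have hle := hmax q hq
  have hlt := q.2.isLt
  rw [map_smul, ← Module.End.mul_apply, ← pow_add]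
  split_ifs with hqm
  · congr 3
    omega
  · rw [pow_apply_eq_zero_of_le (by omega) (hzero q.1), smul_zero]

theorem linearIndependent_sigma_of_iSupIndep {ι : Type*} {κ : ι → Type*} {V : ι → Submodule k W}
    (hV : iSupIndep V) {v : ∀ i, κ i → W} (hmem : ∀ i b, v i b ∈ V i)
    (hv : ∀ i, LinearIndependent k (v i)) :
    LinearIndependent k fun q : Σ i, κ i => v q.1 q.2 := by
  have hspan (i : ι) : Submodule.span k (Set.range (v i)) ≤ V i :=
    Submodule.span_le.2 (Set.range_subset_iff.2 (hmem i))
  refine linearIndependent_iUnion_finite hv fun i J _ hiJ => ?_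
  refine (hV i).mono (hspan i) (iSup₂_le fun j hj => (hspan j).trans ?_)
  exact le_iSup₂_of_le j (ne_of_mem_of_not_mem hj hiJ) le_rfl

theorem pow_apply_mem_span_range {Λ : Type*} {f : Module.End k W} {dv : Λ → ℕ} {e : Λ → W}
    (hzero : ∀ α, (f ^ dv α) (e α) = 0) (α : Λ) (j : ℕ) :
    (f ^ j) (e α) ∈ Submodule.span k
      (Set.range fun q : Σ α : Λ, Fin (dv α) => (f ^ (q.2 : ℕ)) (e q.1)) := by
  by_cases hj : j < dv α
  · exact Submodule.subset_span ⟨⟨α, j, hj⟩, rfl⟩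
  · rw [pow_apply_eq_zero_of_le (not_lt.1 hj) (hzero α)]
    exact zero_mem _

end LinearIndependence

section NarrowLefschetz

universe u

variable {k : Type*} {W : Type u} [Field k] [AddCommGroup W] [Module k W]

/-- The strong Lefschetz property in the narrow sense: the grading `gr` is concentrated in degrees
`0, …, s` and `f ^ (s - 2 d)` maps `gr d` bijectively onto `gr (s - d)` whenever `2 d ≤ s`. -/
structure IsNarrowLefschetz (gr : ℕ → Submodule k W) (f : Module.End k W) (s : ℕ) : Prop where
  map_mem : ∀ d, ∀ x ∈ gr d, f x ∈ gr (d + 1)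
  eq_bot : ∀ d, s < d → gr d = ⊥
  eq_zero : ∀ d a, 2 * d + a = s → ∀ x ∈ gr d, (f ^ a) x = 0 → x = 0
  exists_pow_eq : ∀ d a, 2 * d + a = s → ∀ w ∈ gr (d + a), ∃ x ∈ gr d, (f ^ a) x = w

theorem IsSLEnd.isNarrowLefschetz [FiniteDimensional k W] {gr : ℕ → Submodule k W}
    {f : Module.End k W} {s : ℕ} (hSL : IsSLEnd gr f)
    (hf : ∀ d, ∀ x ∈ gr d, f x ∈ gr (d + 1)) (hs : ∀ d, s < d → gr d = ⊥)
    (hsym : ∀ d ≤ s, Module.finrank k (gr d) = Module.finrank k (gr (s - d))) :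
    IsNarrowLefschetz gr f s := by
  have hbij (d a) (hda : 2 * d + a = s) : (∀ x ∈ gr d, (f ^ a) x = 0 → x = 0) ∧
      ∀ w ∈ gr (d + a), ∃ x ∈ gr d, (f ^ a) x = w := by
    let φ : gr d →ₗ[k] gr (d + a) :=
      (f ^ a).restrict fun x hx => pow_apply_mem_of_apply_mem hf hx a
    have hrank : Module.finrank k (gr d) = Module.finrank k (gr (d + a)) := by
      rw [hsym d (by omega), show s - d = d + a by omega]
    have hiff := LinearMap.injective_iff_surjective_of_finrank_eq_finrank (f := φ) hrank
    have hinj : Function.Injective φ ↔ ∀ x ∈ gr d, (f ^ a) x = 0 → x = 0 := by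
      rw [injective_iff_map_eq_zero]
      exact ⟨fun hφ x hx hfx => congrArg Subtype.val (hφ ⟨x, hx⟩ (Subtype.ext hfx)),
        fun hf x hx => Subtype.ext (hf x x.2 (congrArg Subtype.val hx))⟩
    have hsurj : Function.Surjective φ ↔ ∀ w ∈ gr (d + a), ∃ x ∈ gr d, (f ^ a) x = w := by
      constructor
      · intro hφ w hw
        obtain ⟨x, hx⟩ := hφ ⟨w, hw⟩
        exact ⟨x, x.2, congrArg Subtype.val hx⟩
      · intro hlift w
        obtain ⟨x, hx, hxw⟩ := hlift w w.2
        exact ⟨⟨x, hx⟩, Subtype.ext hxw⟩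
    have hor := hSL a d
    rw [← hinj, ← hsurj, hiff, or_self] at hor
    rwa [← hinj, ← hsurj, hiff, and_self]
  exact ⟨hf, hs, fun d a hda => (hbij d a hda).1, fun d a hda => (hbij d a hda).2⟩

/-- The primitive elements of degree `d` for the Lefschetz operator `f` on a module of socle degree
`s`; meaningful for `2 d ≤ s`. -/
def primitive (gr : ℕ → Submodule k W) (f : Module.End k W) (s d : ℕ) : Submodule k W :=
  gr d ⊓ LinearMap.ker (f ^ (s - 2 * d + 1))

namespace IsNarrowLefschetz

variable {gr : ℕ → Submodule k W} {f : Module.End k W} {s : ℕ}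

theorem exists_sub_mem_primitive (h : IsNarrowLefschetz gr f s) {d : ℕ} (hd : 2 * (d + 1) ≤ s)
    {x : W} (hx : x ∈ gr (d + 1)) : ∃ u ∈ gr d, x - f u ∈ primitive gr f s (d + 1) := by
  obtain ⟨c, hc⟩ : ∃ c, s = 2 * d + (c + 1) := ⟨s - 2 * d - 1, by omega⟩
  have hfx := pow_apply_mem_of_apply_mem h.map_mem hx c
  rw [add_right_comm, add_assoc] at hfx
  obtain ⟨u, hu, hux⟩ := h.exists_pow_eq d (c + 1) hc.symm _ hfx
  refine ⟨u, hu, sub_mem hx (h.map_mem d u hu), ?_⟩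
  rw [show s - 2 * (d + 1) + 1 = c by omega, SetLike.mem_coe, LinearMap.mem_ker, map_sub,
    ← Module.End.mul_apply _ f, ← pow_succ, hux, sub_self]

theorem le_of_primitive_le (h : IsNarrowLefschetz gr f s) {P : Submodule k W}
    (hP : ∀ x ∈ P, f x ∈ P) (hprim : ∀ d, 2 * d ≤ s → primitive gr f s d ≤ P) (d : ℕ) :
    gr d ≤ P := by
  have hlow : ∀ d, 2 * d ≤ s → gr d ≤ P := by
    intro d
    induction d with
    | zero =>
      refine fun _ x hx => hprim 0 (Nat.zero_le s) ⟨hx, ?_⟩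
      have hfx := pow_apply_mem_of_apply_mem h.map_mem hx (s + 1)
      rwa [h.eq_bot _ (by omega), Submodule.mem_bot] at hfx
    | succ d ih =>
      intro hd x hx
      obtain ⟨u, hu, hux⟩ := h.exists_sub_mem_primitive hd hx
      rw [← sub_add_cancel x (f u)]
      exact add_mem (hprim (d + 1) hd hux) (hP _ (ih (by omega) hu))
  rcases le_or_gt (2 * d) s with hd | hd
  · exact hlow d hd
  intro w hw
  by_cases hds : s < d
  · rw [h.eq_bot d hds, Submodule.mem_bot] at hw
    exact hw ▸ zero_mem P
  obtain ⟨x, hx, rfl⟩ := h.exists_pow_eq (s - d) (2 * d - s) (by omega) w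
    (by convert hw using 2; omega)
  exact pow_apply_mem_of_apply_mem (V := fun _ => P) (fun _ => hP) (d := 0)
    (hlow _ (by omega) hx) _

theorem span_range_eq_top (h : IsNarrowLefschetz gr f s) (hgr : DirectSum.IsInternal gr)
    {Λ : Type*} {dv : Λ → ℕ} {e : Λ → W} (hzero : ∀ α, (f ^ dv α) (e α) = 0)
    (hprim : ∀ d, 2 * d ≤ s → primitive gr f s d ≤ Submodule.span k (Set.range e)) :
    Submodule.span k (Set.range fun q : Σ α : Λ, Fin (dv α) => (f ^ (q.2 : ℕ)) (e q.1)) = ⊤ := by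
  set P := Submodule.span k (Set.range fun q : Σ α : Λ, Fin (dv α) => (f ^ (q.2 : ℕ)) (e q.1))
  have hP : P ≤ P.comap f := by
    refine Submodule.span_le.2 (Set.range_subset_iff.2 fun q => ?_)
    rw [SetLike.mem_coe, Submodule.mem_comap, ← Module.End.mul_apply, ← pow_succ']
    exact pow_apply_mem_span_range hzero _ _
  have he : Submodule.span k (Set.range e) ≤ P :=
    Submodule.span_le.2 (Set.range_subset_iff.2 fun α => pow_apply_mem_span_range hzero α 0)
  rw [eq_top_iff, ← hgr.submodule_iSup_eq_top]
  exact iSup_le (h.le_of_primitive_le hP fun d hd => (hprim d hd).trans he)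

theorem linearIndependent_pow_apply_sigma (h : IsNarrowLefschetz gr f s)
    (hgr : DirectSum.IsInternal gr) {κ : {d : ℕ // 2 * d ≤ s} → Type*} {v : ∀ d, κ d → W}
    (hmem : ∀ d (b : κ d), v d b ∈ gr d) (hv : ∀ d, LinearIndependent k (v d)) :
    LinearIndependent k fun q : Σ d, κ d => (f ^ (s - 2 * q.1)) (v q.1 q.2) := by
  have hindep : iSupIndep fun d : {d : ℕ // 2 * d ≤ s} => gr (d + (s - 2 * d)) := by
    refine hgr.submodule_iSupIndep.comp (f := fun d : {d : ℕ // 2 * d ≤ s} => d + (s - 2 * d)) ?_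
    rintro ⟨i, hi⟩ ⟨j, hj⟩ (hij : i + (s - 2 * i) = j + (s - 2 * j))
    exact Subtype.ext (show i = j by omega)
  refine linearIndependent_sigma_of_iSupIndep
    (v := fun (d : {d : ℕ // 2 * d ≤ s}) b => (f ^ (s - 2 * (d : ℕ))) (v d b)) hindep
    (fun d b => pow_apply_mem_of_apply_mem h.map_mem (hmem d b) _) fun d => ?_
  refine (hv d).map (Submodule.disjoint_def.2 fun x hx hfx => ?_)
  exact h.eq_zero d _ (Nat.add_sub_of_le d.2) x
    (Submodule.span_le.2 (Set.range_subset_iff.2 (hmem d)) hx) hfx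

theorem isDecompEnd_of_basis (h : IsNarrowLefschetz gr f s) (hgr : DirectSum.IsInternal gr)
    {κ : {d : ℕ // 2 * d ≤ s} → Type*} (B : ∀ d, Module.Basis (κ d) k (primitive gr f s d)) :
    IsDecompEnd gr f (fun q : Σ d, κ d => (q.1 : ℕ)) (fun q => s - 2 * q.1 + 1)
      (fun q => (B q.1 q.2 : W)) := by
  have hmem (q : Σ d, κ d) : (B q.1 q.2 : W) ∈ gr q.1 :=
    (Submodule.mem_inf.1 (B q.1 q.2).2).1
  have hzero (q : Σ d, κ d) : (f ^ (s - 2 * q.1 + 1)) (B q.1 q.2 : W) = 0 :=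
    LinearMap.mem_ker.1 (Submodule.mem_inf.1 (B q.1 q.2).2).2
  have hB (d) : LinearIndependent k fun b => (B d b : W) :=
    (B d).linearIndependent.map' _ (primitive gr f s d).ker_subtype
  have htop : LinearIndependent k fun q : Σ d, κ d =>
      (f ^ (s - 2 * q.1 + 1 - 1)) (B q.1 q.2 : W) := by
    simpa only [Nat.add_sub_cancel] using
      h.linearIndependent_pow_apply_sigma hgr (fun d b => hmem ⟨d, b⟩) hB
  have hprim (d : ℕ) (hd : 2 * d ≤ s) : primitive gr f s d ≤
      Submodule.span k (Set.range fun q : Σ d, κ d => (B q.1 q.2 : W)) := by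
    rw [← Submodule.map_subtype_top (primitive gr f s d), ← (B ⟨d, hd⟩).span_eq,
      Submodule.map_span_le]
    rintro _ ⟨b, rfl⟩
    exact Submodule.subset_span ⟨⟨⟨d, hd⟩, b⟩, rfl⟩
  have hindep := linearIndependent_pow_apply hzero htop
  have hspan := h.span_range_eq_top hgr hzero hprim
  exact ⟨fun q => Nat.succ_pos _, fun q j _ => pow_apply_mem_of_apply_mem h.map_mem (hmem q) j,
    hzero, hindep, hspan⟩

theorem exists_isDecompEnd (h : IsNarrowLefschetz gr f s) (hgr : DirectSum.IsInternal gr) :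
    ∃ (Λ : Type u) (iv dv : Λ → ℕ) (e : Λ → W), IsDecompEnd gr f iv dv e ∧
      ∀ α, 2 * iv α + dv α = s + 1 := by
  refine ⟨_, _, _, _, h.isDecompEnd_of_basis hgr fun d => Module.Free.chooseBasis k _, fun q => ?_⟩
  rw [← add_assoc, Nat.add_sub_of_le q.1.2]

end IsNarrowLefschetz

end NarrowLefschetz

section Action

variable {k A T : Type*} [Field k] [CommRing A] [Algebra k A] [AddCommGroup T] [Module k T]
  [Module A T] [IsScalarTower k A T]

theorem lsmul_pow_apply (z : A) (j : ℕ) (x : T) : (Algebra.lsmul k k T z ^ j) x = z ^ j • x := by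
  rw [← map_pow, Algebra.lsmul_coe]

theorem isSLEnd_lsmul_iff {gr : ℕ → Submodule k T} {z : A} :
    IsSLEnd gr (Algebra.lsmul k k T z) ↔ IsSLAction gr z := by
  simp only [IsSLEnd, IsSLAction, lsmul_pow_apply]

theorem isDecompEnd_lsmul_iff {gr : ℕ → Submodule k T} {z : A} {Λ : Type*} {iv dv : Λ → ℕ}
    {e : Λ → T} : IsDecompEnd gr (Algebra.lsmul k k T z) iv dv e ↔ IsDecomp gr z iv dv e := by
  simp only [IsDecompEnd, IsDecomp, lsmul_pow_apply]

end Action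

theorem IsGrading.lsmul_mem {k : Type*} [Field k] {n : ℕ} {M : Type*} [AddCommGroup M] [Module k M]
    [Module (MvPolynomial (Fin n) k) M] [IsScalarTower k (MvPolynomial (Fin n) k) M]
    {gr : ℕ → Submodule k M} (hgr : IsGrading k n gr) {l : MvPolynomial (Fin n) k}
    (hl : l ∈ homogeneousSubmodule (Fin n) k 1) (d : ℕ) (x : M) (hx : x ∈ gr d) :
    Algebra.lsmul k k M l x ∈ gr (d + 1) := by
  rw [add_comm]
  exact hgr.2 1 d l hl x hx

theorem tensorAct_tmul_one_add_one_tmul {k : Type*} [Field k] {n : ℕ} (M N : Type*)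
    [AddCommGroup M] [Module k M] [Module (MvPolynomial (Fin n) k) M]
    [IsScalarTower k (MvPolynomial (Fin n) k) M] [AddCommGroup N] [Module k N]
    [Module (MvPolynomial (Fin n) k) N] [IsScalarTower k (MvPolynomial (Fin n) k) N]
    (l y : MvPolynomial (Fin n) k) :
    tensorAct k M N (l ⊗ₜ 1 + 1 ⊗ₜ y) =
      (Algebra.lsmul k k M l).rTensor N + (Algebra.lsmul k k N y).lTensor M := by
  ext m m'
  simp [tensorAct, Module.endTensorEndAlgHom_apply]

theorem statement19_general {k M N : Type*} [Field k] [AddCommGroup M] [Module k M]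
    [FiniteDimensional k M] [AddCommGroup N] [Module k N]
    {grM : ℕ → Submodule k M} (hgrM : DirectSum.IsInternal grM)
    {grN : ℕ → Submodule k N} (hgrN : DirectSum.IsInternal grN)
    {s t : ℕ} (hs : ∀ d, s < d → grM d = ⊥) (ht : ∀ d, t < d → grN d = ⊥)
    (hk : ∀ m : ℕ, 0 < m → m ≤ s + t → (m : k) ≠ 0)
    {f : Module.End k M} (hf : ∀ d, ∀ x ∈ grM d, f x ∈ grM (d + 1)) (hfSL : IsSLEnd grM f)
    (hsym : ∀ d ≤ s, Module.finrank k (grM d) = Module.finrank k (grM (s - d)))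
    {g : Module.End k N} (hgSL : IsSLEnd grN g)
    {Λ : Type*} {iv dv : Λ → ℕ} {e : Λ → N} (hdec : IsDecompEnd grN g iv dv e)
    (hac : AlmostCentered iv dv) :
    IsSLEnd (tensorGr grM grN) (f.rTensor N + g.lTensor M) := by
  obtain ⟨ΛM, ivM, dvM, eM, hdecM, hcentreM⟩ :=
    (hfSL.isNarrowLefschetz hf hs hsym).exists_isDecompEnd hgrM
  refine ((hdecM.isSl2Decomposition hgrM).tensor (hdec.isSl2Decomposition hgrN)).isSLEnd
    (fun q m hm hmle => hk m hm ?_) fun q r => ?_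
  · have hM := hcentreM q.1
    have hN := hdec.add_le_of_eq_bot ht q.2
    omega
  · have hMq := hcentreM q.1
    have hMr := hcentreM r.1
    have hdvq := hdec.1 q.2
    have hdvr := hdec.1 r.2
    have hdvMq := hdecM.1 q.1
    have hdvMr := hdecM.1 r.1
    have hN := hdec.centre_le_centre_add_one hgSL hac q.2 r.2
    omega

/-- Let `M` and `N` be Artinian graded modules over `R = k[x_1, …, x_n]`
with the strong Lefschetz property, over a field `k` of characteristic `p > s + t`, where
`s` and `t` are the socle degrees of `M` and `N`.  Let `l, y ∈ R_1` be strong Lefschetz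
elements for `M` and `N` respectively.  If the Hilbert function of `M` is symmetric and the
decomposition of `N` as a graded `k[y]`-module is almost centered, then `M ⊗_k N` has the
strong Lefschetz property. -/
theorem statement19 {k : Type} [Field k] (p : ℕ) (hp : p ≠ 0) [CharP k p]
    {n : ℕ} {M N : Type}
    [AddCommGroup M] [Module k M] [Module (MvPolynomial (Fin n) k) M]
    [IsScalarTower k (MvPolynomial (Fin n) k) M]
    [Module.Finite (MvPolynomial (Fin n) k) M] [FiniteDimensional k M]
    [AddCommGroup N] [Module k N] [Module (MvPolynomial (Fin n) k) N]
    [IsScalarTower k (MvPolynomial (Fin n) k) N]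
    [Module.Finite (MvPolynomial (Fin n) k) N] [FiniteDimensional k N]
    (grM : ℕ → Submodule k M) (hgrM : IsGrading k n grM)
    (grN : ℕ → Submodule k N) (hgrN : IsGrading k n grN)
    (s : ℕ) (hs : IsSocleDegree grM s)
    (t : ℕ) (ht : IsSocleDegree grN t)
    (hst : s + t < p)
    (l : MvPolynomial (Fin n) k) (hl : l ∈ homogeneousSubmodule (Fin n) k 1)
    (hSLM : IsSLAction grM l)
    (y : MvPolynomial (Fin n) k) (hy : y ∈ homogeneousSubmodule (Fin n) k 1)
    (hSLN : IsSLAction grN y)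
    (hsym : ∀ d : ℕ, d ≤ s →
      Module.finrank k (grM d) = Module.finrank k (grM (s - d)))
    {ΛN : Type} [Fintype ΛN] (ivN dvN : ΛN → ℕ) (eN : ΛN → N)
    (hdecN : IsDecomp grN y ivN dvN eN) (hacN : AlmostCentered ivN dvN) :
    ∃ w : (MvPolynomial (Fin n) k) ⊗[k] (MvPolynomial (Fin n) k),
      IsLinearForm2 w ∧ IsSLEnd (tensorGr grM grN) (tensorAct k M N w) := by
  have hk : ∀ m : ℕ, 0 < m → m ≤ s + t → (m : k) ≠ 0 := fun m hm hmst h0 =>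
    Nat.not_dvd_of_pos_of_lt hm (hmst.trans_lt hst) ((CharP.cast_eq_zero_iff k p m).1 h0)
  refine ⟨l ⊗ₜ 1 + 1 ⊗ₜ y, ⟨l, y, hl, hy, rfl⟩, ?_⟩
  rw [tensorAct_tmul_one_add_one_tmul]
  exact statement19_general hgrM.1 hgrN.1 hs.2 ht.2 hk (hgrM.lsmul_mem hl)
    (isSLEnd_lsmul_iff.2 hSLM) hsym (isSLEnd_lsmul_iff.2 hSLN) (isDecompEnd_lsmul_iff.2 hdecN) hacN
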